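/- arXiv:1608.03499 — 2 statements merged into one kernel-verified Lean document; each statement's English description precedes it below -/
import Mathlib

section
/- Fix b ∈ ℕ^n with Σ_i b_i even (so that the fiber V_n^{-1}[b] is nonempty) and with b_i ≥ n−2 for every i ∈ [n]. Then the number of equivalence classes of V_n^{-1}[b] modulo L'_n equals exactly 2^{c_{n−1}}; in particular, all such fibers have the same number of equivalence classes. -/
open scoped BigOperators

namespace Veronese

open MvPolynomial

/-- `c m = C(m,2)`. -/
def c (m : ℕ) : ℕ := m.choose 2

variable (n : ℕ)

/-- multiplicity (as ℤ) of the index `i` in the unordered pair `s`. -/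
def wt (s : Sym2 (Fin n)) : Fin n → ℤ :=
  Sym2.lift ⟨fun a b i => (if i = a then 1 else 0) + (if i = b then 1 else 0),
    fun a b => funext fun i => add_comm _ _⟩ s

/-- The Veronese grading map `V_n : ℤ^P → ℤ^n`, sending `e_{ij} ↦ e_i + e_j`. -/
def Vmap : (Sym2 (Fin n) → ℤ) →ₗ[ℤ] (Fin n → ℤ) where
  toFun u := fun i => ∑ s : Sym2 (Fin n), u s * wt n s i
  map_add' u v := funext fun i => by
    simp [add_mul, Finset.sum_add_distrib]
  map_smul' m u := funext fun i => by
    simp [Finset.mul_sum, smul_eq_mul, mul_assoc]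

/-- The Veronese lattice `L_n = ker V_n`. -/
def Llat : Submodule ℤ (Sym2 (Fin n) → ℤ) := LinearMap.ker (Vmap n)

/-- standard basis vector `e_{ij}` of `ℤ^P`. -/
def e (i j : Fin n) : Sym2 (Fin n) → ℤ := Pi.single s(i, j) 1

lemma e_comm (i j : Fin n) : e n i j = e n j i := by
  unfold e; rw [Sym2.eq_swap]

/-- `[ij|ij] = e_{ii} + e_{jj} - 2 e_{ij}`. -/
def minorVec (i j : Fin n) : Sym2 (Fin n) → ℤ := e n i i + e n j j - 2 • e n i j

/-- The principal minor lattice `L'_n`. -/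
def L'lat : Submodule ℤ (Sym2 (Fin n) → ℤ) :=
  Submodule.span ℤ {v | ∃ i j : Fin n, i < j ∧ v = minorVec n i j}

/-- the last index `n` (zero-based: `n-1`) of `Fin n`. -/
def lastIdx (hn : 0 < n) : Fin n := ⟨n - 1, Nat.sub_lt hn one_pos⟩

/-- embedding `[n-1] → [n]`. -/
def ι : Fin (n - 1) → Fin n := Fin.castLE (Nat.sub_le n 1)

/-- `[in|jn] = e_{ij} + e_{nn} - e_{in} - e_{jn}` for `i,j ∈ [n-1]`. -/
def Bvec (hn : 0 < n) : Sym2 (Fin (n - 1)) → (Sym2 (Fin n) → ℤ) :=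
  Sym2.lift ⟨fun i j =>
      e n (ι n i) (ι n j) + e n (lastIdx n hn) (lastIdx n hn)
        - e n (ι n i) (lastIdx n hn) - e n (ι n j) (lastIdx n hn),
    fun i j => by dsimp only; rw [e_comm n (ι n i) (ι n j)]; ring⟩

/-- The family `B'`: `[in|in]` on the diagonal, `2[in|jn]` off it. -/
noncomputable def B'vec (hn : 0 < n) (s : Sym2 (Fin (n - 1))) : Sym2 (Fin n) → ℤ :=
  if s.IsDiag then Bvec n hn s else 2 • Bvec n hn s

/-- multiplicity (as ℕ) of the index `i` in the unordered pair `s`. -/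
def wtN (s : Sym2 (Fin n)) : Fin n → ℕ :=
  Sym2.lift ⟨fun a b i => (if i = a then 1 else 0) + (if i = b then 1 else 0),
    fun a b => funext fun i => add_comm _ _⟩ s

/-- The Veronese degree of an exponent vector `u ∈ ℕ^P`. -/
def VN (u : Sym2 (Fin n) →₀ ℕ) : Fin n → ℕ := fun i => ∑ s : Sym2 (Fin n), u s * wtN n s i

/-- The fiber `V_n^{-1}[b] = {u ∈ ℕ^P : V_n u = b}`. -/
def fiber (b : Fin n → ℕ) : Set (Sym2 (Fin n) →₀ ℕ) := {u | VN n u = b}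

/-- natural inclusion `ℕ^P → ℤ^P`. -/
def toZ (u : Sym2 (Fin n) →₀ ℕ) : Sym2 (Fin n) → ℤ := fun s => (u s : ℤ)

lemma fiber_finite (b : Fin n → ℕ) : (fiber n b).Finite := by
  classical
  have hsub : fiber n b ⊆
      ↑(Finset.Iic ((Finsupp.equivFunOnFinite.symm fun _ => ∑ i, b i) : Sym2 (Fin n) →₀ ℕ)) := by
    intro u hu
    simp only [Finset.coe_Iic, Set.mem_Iic, Finsupp.le_def]
    intro s
    induction s using Sym2.ind with
    | _ i j =>
      have h1 : u s(i, j) * wtN n s(i, j) i ≤ VN n u i :=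
        Finset.single_le_sum (f := fun s => u s * wtN n s i)
          (fun s _ => Nat.zero_le _) (Finset.mem_univ s(i, j))
      have h2 : 1 ≤ wtN n s(i, j) i := by
        simp only [wtN, Sym2.lift_mk, if_pos rfl]
        exact Nat.le_add_right 1 _
      have h3 : u s(i, j) ≤ b i := by
        have hb : VN n u i = b i := congrFun hu i
        calc u s(i, j) ≤ u s(i, j) * wtN n s(i, j) i := Nat.le_mul_of_pos_right _ h2
          _ ≤ VN n u i := h1
          _ = b i := hb
      calc u s(i, j) ≤ b i := h3
        _ ≤ ∑ i, b i := Finset.single_le_sum (fun _ _ => Nat.zero_le _) (Finset.mem_univ _)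
        _ = (Finsupp.equivFunOnFinite.symm fun _ => ∑ i, b i) s(i, j) := by
            simp
  exact Set.Finite.subset (Finset.finite_toSet _) hsub

variable (k : Type*) [Field k]

/-- the polynomial ring `k[x_{ij}]`. -/
abbrev R := MvPolynomial (Sym2 (Fin n)) k

/-- The principal minor ideal `J_n`. -/
noncomputable def Jideal : Ideal (R n k) :=
  Ideal.span {f | ∃ i j : Fin n, i < j ∧ f = X s(i, i) * X s(j, j) - X s(i, j) ^ 2}

/-- The map `x_{ij} ↦ t_i t_j`. -/
noncomputable def veroHom : R n k →ₐ[k] MvPolynomial (Fin n) k :=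
  aeval fun s => Sym2.lift ⟨fun a b => X a * X b, fun a b => mul_comm _ _⟩ s

/-- The second Veronese ideal `I_n`. -/
noncomputable def Iideal : Ideal (R n k) := RingHom.ker (veroHom n k)

/-- A ℤ₂-twisting: an automorphism sending each variable to ± itself. -/
def IsTwisting (φ : R n k ≃ₐ[k] R n k) : Prop :=
  ∀ s : Sym2 (Fin n), φ (X s) = X s ∨ φ (X s) = - X s

/-- `f` is V_n-homogeneous of degree `b`. -/
def VHomog (f : R n k) (b : Fin n → ℕ) : Prop := ∀ u ∈ f.support, VN n u = b

/-- The fiber over `b` as a finite set. -/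
noncomputable def fiberFinset (b : Fin n → ℕ) : Finset (Sym2 (Fin n) →₀ ℕ) :=
  (fiber_finite n b).toFinset

/-- generating function of the canonical (0/1 off-diagonal) representatives of
the fiber over `b`. -/
noncomputable def pplusAt (b : Fin n → ℕ) : R n k :=
  ∑ u ∈ (fiberFinset n b).filter (fun u => ∀ s : Sym2 (Fin n), ¬s.IsDiag → u s ≤ 1),
    monomial u (1 : k)

/-- `p⁺_{n,j}` (for `n` odd): fiber over `(n-2,…,n-2) + e_j`. -/
noncomputable def pplusOdd (j : Fin n) : R n k :=
  pplusAt n k fun i => (n - 2) + if i = j then 1 else 0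

/-- `p⁺_n` (for `n` even): fiber over `(n-2,…,n-2)`. -/
noncomputable def pplusEven : R n k :=
  pplusAt n k fun _ => n - 2

/-- `p_n = ∏_{i<j∈[n-1]} (x_{ij} x_{nn} + x_{in} x_{jn})`. -/
noncomputable def pn (hn : 0 < n) : R n k :=
  ∏ p ∈ Finset.univ.filter (fun p : Fin (n - 1) × Fin (n - 1) => p.1 < p.2),
    (X s(ι n p.1, ι n p.2) * X s(lastIdx n hn, lastIdx n hn)
      + X s(ι n p.1, lastIdx n hn) * X s(ι n p.2, lastIdx n hn))


lemma wtN_eq (n : ℕ) (s : Sym2 (Fin n)) (i : Fin n) :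
    wtN n s i = (∑ j, if s = s(i, j) then 1 else 0) + (if s = s(i, i) then 1 else 0) := by
  induction s using Sym2.ind with
  | _ a b =>
    simp only [wtN, Sym2.lift_mk]
    by_cases ha : i = a
    · subst ha
      have : ∀ j, (s(i, b) = s(i, j)) ↔ (b = j) := by intro j; rw [Sym2.eq_iff]; grind
      simp only [this]
      simp [eq_comm, add_comm]
    · by_cases hb : i = b
      · subst hb
        have : ∀ j, (s(a, i) = s(i, j)) ↔ (a = j) := by
          intro j; rw [Sym2.eq_iff]; grind
        simp only [this]
        simp [ha, eq_comm]
      · have : ∀ j, ¬ (s(a, b) = s(i, j)) := by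
          intro j; rw [Sym2.eq_iff]; grind
        simp [this, ha, hb]

lemma wt_eq (n : ℕ) (s : Sym2 (Fin n)) (i : Fin n) : wt n s i = (wtN n s i : ℤ) := by
  induction s using Sym2.ind with
  | _ a b => simp [wt, wtN]

lemma sum_wtN {M : Type*} [CommSemiring M] (n : ℕ) (f : Sym2 (Fin n) → M) (i : Fin n) :
    ∑ s, f s * (wtN n s i : M) = ∑ j, f s(i, j) + f s(i, i) := by
  simp only [wtN_eq, Nat.cast_add, Nat.cast_sum, mul_add, Finset.sum_add_distrib, Finset.mul_sum]
  rw [Finset.sum_comm]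
  simp

lemma VN_eq (n : ℕ) (u : Sym2 (Fin n) →₀ ℕ) (i : Fin n) :
    VN n u i = ∑ j, u s(i, j) + u s(i, i) := by
  have := sum_wtN n (fun s => u s) i
  simpa [VN] using this

lemma Vmap_eq (n : ℕ) (u : Sym2 (Fin n) → ℤ) (i : Fin n) :
    Vmap n u i = ∑ j, u s(i, j) + u s(i, i) := by
  have := sum_wtN n u i
  simpa [Vmap, wt_eq] using this

lemma Vmap_minorVec (n : ℕ) (i j : Fin n) : Vmap n (minorVec n i j) = 0 := by
  have h : ∀ a b, Vmap n (e n a b) = wt n s(a, b) := by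
    intro a b
    funext k
    simp [Vmap, e, Pi.single_apply]
  simp only [minorVec, map_sub, map_add, map_nsmul, h]
  funext k
  simp [wt]
  ring

lemma minorVec_off (n : ℕ) (i j a b : Fin n) (hij : i < j) (hab : a < b) :
    minorVec n i j s(a, b) = if (i, j) = (a, b) then -2 else 0 := by
  simp only [minorVec, e, Pi.add_apply, Pi.sub_apply, Pi.smul_apply, Pi.single_apply,
    Sym2.eq_iff, Prod.mk.injEq]
  grind

lemma L'_even (n : ℕ) (d : Sym2 (Fin n) → ℤ) (hd : d ∈ L'lat n) (a b : Fin n) (hab : a < b) :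
    (2 : ℤ) ∣ d s(a, b) := by
  unfold L'lat at hd
  induction hd using Submodule.span_induction with
  | mem x hx =>
    obtain ⟨i, j, hij, rfl⟩ := hx
    rw [minorVec_off n i j a b hij hab]
    split_ifs <;> simp
  | zero => simp
  | add x y _ _ hx hy => exact dvd_add hx hy
  | smul r x _ hx => exact Dvd.dvd.mul_left hx r

lemma mem_L' (n : ℕ) (d : Sym2 (Fin n) → ℤ) (hV : ∀ i, Vmap n d i = 0)
    (hd : ∀ a b : Fin n, a < b → (2 : ℤ) ∣ d s(a, b)) : d ∈ L'lat n := by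
  set x : Sym2 (Fin n) → ℤ :=
    ∑ p ∈ Finset.univ.filter (fun p : Fin n × Fin n => p.1 < p.2),
      (d s(p.1, p.2) / 2) • minorVec n p.1 p.2 with hx
  have hxL : x ∈ L'lat n := by
    refine Submodule.sum_mem _ fun p hp => Submodule.smul_mem _ _ (Submodule.subset_span ?_)
    exact ⟨p.1, p.2, by simpa using hp, rfl⟩
  have hxV : Vmap n x = 0 := by
    rw [hx, map_sum]
    refine Finset.sum_eq_zero fun p _ => ?_
    rw [map_smul, Vmap_minorVec, smul_zero]
  have hoff : ∀ a b : Fin n, a < b → (d + x) s(a, b) = 0 := by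
    intro a b hab
    have : x s(a, b) = - d s(a, b) := by
      rw [hx, Finset.sum_apply, Finset.sum_eq_single (a, b)]
      · have := hd a b hab
        simp only [Pi.smul_apply, minorVec_off n a b a b hab hab, if_true, smul_eq_mul]
        omega
      · intro p hp hne
        have hp' : p.1 < p.2 := by simpa using hp
        simp only [Pi.smul_apply, minorVec_off n p.1 p.2 a b hp' hab]
        simp [hne]
      · intro h; simp [hab] at h
    simp [this]
  have hoff' : ∀ a b : Fin n, a ≠ b → (d + x) s(a, b) = 0 := by
    intro a b hab
    rcases lt_or_gt_of_ne hab with h | h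
    · exact hoff a b h
    · rw [Sym2.eq_swap]; exact hoff b a h
  have hzero : d + x = 0 := by
    funext s
    induction s using Sym2.ind with
    | _ a b =>
      by_cases hab : a = b
      · subst hab
        have h1 : Vmap n (d + x) a = 0 := by simp [map_add, hxV, hV]
        rw [Vmap_eq, Finset.sum_eq_single a (fun j _ hj => hoff' a j hj.symm) (by simp)] at h1
        simp only [Pi.zero_apply]
        omega
      · exact hoff' a b hab
  rw [eq_neg_of_add_eq_zero_left hzero]
  exact Submodule.neg_mem _ hxL

lemma Vmap_toZ (n : ℕ) (u : Sym2 (Fin n) →₀ ℕ) (i : Fin n) :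
    Vmap n (toZ n u) i = (VN n u i : ℤ) := by
  rw [Vmap_eq, VN_eq]; simp [toZ]

lemma equiv_iff (n : ℕ) (u v : Sym2 (Fin n) →₀ ℕ) (h : VN n u = VN n v) :
    toZ n u - toZ n v ∈ L'lat n ↔
      ∀ a b : Fin n, a < b → (u s(a, b) : ZMod 2) = (v s(a, b) : ZMod 2) := by
  have key : ∀ s, ((2 : ℤ) ∣ (toZ n u - toZ n v) s) ↔ (u s : ZMod 2) = (v s : ZMod 2) := by
    intro s
    rw [ZMod.natCast_eq_natCast_iff']
    simp only [toZ, Pi.sub_apply]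
    omega
  constructor
  · intro hd a b hab
    exact (key _).1 (L'_even n _ hd a b hab)
  · intro hd
    refine mem_L' n _ ?_ fun a b hab => (key _).2 (hd a b hab)
    intro i
    rw [map_sub, Pi.sub_apply, Vmap_toZ, Vmap_toZ, h, sub_self]

/-- The parity pattern of the pairs not involving the last index. -/
def pat (m : ℕ) (u : Sym2 (Fin (m + 1)) →₀ ℕ) : {s : Sym2 (Fin m) // ¬ s.IsDiag} → ZMod 2 :=
  fun s => (u (s.1.map Fin.castSucc) : ZMod 2)

lemma pat_inj (m : ℕ) (u v : Sym2 (Fin (m + 1)) →₀ ℕ) (h : VN _ u = VN _ v)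
    (hp : pat m u = pat m v) : toZ _ u - toZ _ v ∈ L'lat (m + 1) := by
  have h0 : ∀ i j : Fin m, i ≠ j → (u s(i.castSucc, j.castSucc) : ZMod 2)
      = (v s(i.castSucc, j.castSucc) : ZMod 2) := by
    intro i j hij
    have := congrFun hp ⟨s(i, j), by simpa using hij⟩
    simpa [pat] using this
  have h1 : ∀ i : Fin m, (u s(i.castSucc, Fin.last m) : ZMod 2)
      = (v s(i.castSucc, Fin.last m) : ZMod 2) := by
    intro i
    have hi := congrArg (Nat.cast : ℕ → ZMod 2) (congrFun h i.castSucc)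
    rw [VN_eq, VN_eq, Fin.sum_univ_castSucc, Fin.sum_univ_castSucc] at hi
    push_cast at hi
    rw [← Finset.add_sum_erase _ _ (Finset.mem_univ i),
      ← Finset.add_sum_erase _ (fun j : Fin m => (v s(i.castSucc, j.castSucc) : ZMod 2))
        (Finset.mem_univ i),
      Finset.sum_congr rfl (g := fun j : Fin m => (v s(i.castSucc, j.castSucc) : ZMod 2))
        (fun j hj => h0 i j (Finset.ne_of_mem_erase hj).symm)] at hi
    have e1 := CharTwo.add_self_eq_zero (u s(i.castSucc, i.castSucc) : ZMod 2)
    have e2 := CharTwo.add_self_eq_zero (v s(i.castSucc, i.castSucc) : ZMod 2)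
    linear_combination hi - e1 + e2
  rw [equiv_iff _ _ _ h]
  intro a b hab
  induction a using Fin.lastCases with
  | last => exact absurd hab (not_lt.2 (Fin.le_last b))
  | cast a =>
    induction b using Fin.lastCases with
    | last => exact h1 a
    | cast b => exact h0 a b (by rintro rfl; exact lt_irrefl _ hab)

lemma sum_symm_zero (m : ℕ) (w : Fin m → Fin m → ZMod 2) (hs : ∀ i j, w i j = w j i)
    (hd : ∀ i, w i i = 0) : ∑ i, ∑ j, w i j = 0 := by
  rw [← Finset.sum_product']
  refine Finset.sum_involution (fun p _ => (p.2, p.1)) ?_ ?_ ?_ ?_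
  · intro p _
    simp only [hs p.2 p.1]
    exact CharTwo.add_self_eq_zero _
  · intro p _ hp heq
    apply hp
    have : p.2 = p.1 := congrArg Prod.fst heq
    rw [this, hd]
  · simp
  · simp

/-- Every symmetric zero-diagonal pattern with the right row sums is realised. -/
lemma exists_full (m : ℕ) (b : Fin (m + 1) → ℕ) (hsum : Even (∑ i, b i))
    (w : Fin m → Fin m → ZMod 2) (hs : ∀ i j, w i j = w j i) (hd : ∀ i, w i i = 0) :
    ∃ F : Fin (m + 1) → Fin (m + 1) → ZMod 2, (∀ i j, F i j = F j i) ∧ (∀ i, F i i = 0) ∧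
      (∀ i j : Fin m, F i.castSucc j.castSucc = w i j) ∧ ∀ i, ∑ j, F i j = (b i : ZMod 2) := by
  let r : Fin m → ZMod 2 := fun i => (b i.castSucc : ZMod 2) - ∑ j, w i j
  let F : Fin (m + 1) → Fin (m + 1) → ZMod 2 := fun i j =>
    Fin.lastCases (motive := fun _ => ZMod 2)
      (Fin.lastCases (motive := fun _ => ZMod 2) 0 r j)
      (fun i' => Fin.lastCases (motive := fun _ => ZMod 2) (r i') (fun j' => w i' j') j) i
  have Fcc : ∀ i j : Fin m, F i.castSucc j.castSucc = w i j := by intro i j; simp [F]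
  have Fcl : ∀ i : Fin m, F i.castSucc (Fin.last m) = r i := by intro i; simp [F]
  have Flc : ∀ i : Fin m, F (Fin.last m) i.castSucc = r i := by intro i; simp [F]
  have Fll : F (Fin.last m) (Fin.last m) = 0 := by simp [F]
  refine ⟨F, ?_, ?_, Fcc, ?_⟩
  · intro i j
    induction i using Fin.lastCases with
    | last =>
      induction j using Fin.lastCases with
      | last => rfl
      | cast j => rw [Flc, Fcl]
    | cast i =>
      induction j using Fin.lastCases with
      | last => rw [Flc, Fcl]
      | cast j => rw [Fcc, Fcc, hs]
  · intro i
    induction i using Fin.lastCases with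
    | last => exact Fll
    | cast i => rw [Fcc, hd]
  · intro i
    rw [Fin.sum_univ_castSucc]
    induction i using Fin.lastCases with
    | last =>
      simp only [Flc, Fll, r, Finset.sum_sub_distrib, sum_symm_zero m w hs hd]
      have h2 : ((∑ i, b i : ℕ) : ZMod 2) = 0 := (ZMod.natCast_eq_zero_iff_even).2 hsum
      rw [Fin.sum_univ_castSucc] at h2
      push_cast at h2
      have e1 := CharTwo.add_self_eq_zero (b (Fin.last m) : ZMod 2)
      linear_combination h2 - e1
    | cast i =>
      simp only [Fcc, Fcl, r]
      ring

lemma pat_surj (m : ℕ) (b : Fin (m + 1) → ℕ) (hsum : Even (∑ i, b i))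
    (hb : ∀ i, m - 1 ≤ b i) (g : {s : Sym2 (Fin m) // ¬ s.IsDiag} → ZMod 2) :
    ∃ u ∈ fiber (m + 1) b, pat m u = g := by
  classical
  obtain ⟨F, Fs, Fd, Fw, Fr⟩ := exists_full m b hsum
    (fun i j => if h : ¬ (s(i, j) : Sym2 (Fin m)).IsDiag then g ⟨s(i, j), h⟩ else 0)
    (by intro i j; simp only [Sym2.eq_swap (a := i) (b := j)]) (by intro i; simp)
  let deg : Fin (m + 1) → ℕ := fun i => ∑ j, (F i j).val
  have hdeg : ∀ i, deg i = ∑ j, (F i j).val := fun _ => rfl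
  have hmod : ∀ i, deg i % 2 = b i % 2 := by
    intro i
    have : ((deg i : ℕ) : ZMod 2) = (b i : ZMod 2) := by
      rw [← Fr i, hdeg]; push_cast; simp
    exact (ZMod.natCast_eq_natCast_iff' _ _ _).1 this
  have herase : ∀ i, ∑ j ∈ Finset.univ.erase i, (F i j).val = deg i := by
    intro i
    rw [hdeg, ← Finset.add_sum_erase _ _ (Finset.mem_univ i), Fd]; simp
  have hle : ∀ i, deg i ≤ b i := by
    intro i
    have h1 : deg i ≤ m := by
      rw [← herase i]
      calc _ ≤ ∑ j ∈ Finset.univ.erase i, 1 :=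
            Finset.sum_le_sum fun j _ => Nat.le_of_lt_succ (ZMod.val_lt (F i j))
        _ = m := by simp
    have := hmod i
    have := hb i
    omega
  let f : Sym2 (Fin (m + 1)) → ℕ := Sym2.lift
    ⟨fun i j => if i = j then (b i - deg i) / 2 else (F i j).val, by
      intro i j
      by_cases h : i = j
      · subst h; rfl
      · simp only [h, Ne.symm h, if_false, Fs i j]⟩
  have fd : ∀ i, f s(i, i) = (b i - deg i) / 2 := by intro i; simp [f]
  have fo : ∀ i j, i ≠ j → f s(i, j) = (F i j).val := by intro i j h; simp [f, h]
  refine ⟨Finsupp.equivFunOnFinite.symm f, ?_, ?_⟩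
  · funext i
    rw [VN_eq]
    simp only [Finsupp.coe_equivFunOnFinite_symm]
    rw [← Finset.add_sum_erase _ _ (Finset.mem_univ i),
      Finset.sum_congr rfl (g := fun j => (F i j).val)
        (fun j hj => fo i j (Finset.ne_of_mem_erase hj).symm), herase, fd]
    have := hmod i
    have := hle i
    omega
  · funext ⟨s, hs⟩
    induction s using Sym2.ind with
    | _ i j =>
      have hij : i ≠ j := by simpa using hs
      have hij' : i.castSucc ≠ j.castSucc := by simpa using hij
      simp only [pat, Sym2.map_mk, Finsupp.coe_equivFunOnFinite_symm]
      rw [fo _ _ hij', Fw, dif_pos hs]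
      simp

/-- If `Σ b_i` is even and `b_i ≥ n-2` for all `i`, then the fiber
`V_n^{-1}[b]` has exactly `2^{c_{n-1}}` equivalence classes modulo `L'_n`. -/
theorem fiber_class_count (n : ℕ) (hn : 2 ≤ n) (b : Fin n → ℕ)
    (hsum : Even (∑ i, b i)) (hb : ∀ i, n - 2 ≤ b i) :
    Nat.card (Quot fun u v : ↥(fiber n b) => toZ n ↑u - toZ n ↑v ∈ L'lat n) =
      2 ^ c (n - 1) := by
  obtain ⟨m, rfl⟩ : ∃ m, n = m + 1 := ⟨n - 1, by omega⟩
  have hb' : ∀ i, m - 1 ≤ b i := fun i => by have := hb i; omega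
  have heq : ∀ u v : ↥(fiber (m + 1) b), VN (m + 1) u.1 = VN (m + 1) v.1 :=
    fun u v => u.2.trans v.2.symm
  let φ : (Quot fun u v : ↥(fiber (m + 1) b) => toZ (m + 1) ↑u - toZ (m + 1) ↑v ∈ L'lat (m + 1)) →
      ({s : Sym2 (Fin m) // ¬ s.IsDiag} → ZMod 2) :=
    Quot.lift (fun u => pat m u.1) (by
      intro u v h
      have h' := (equiv_iff _ _ _ (heq u v)).1 h
      funext ⟨s, hs⟩
      induction s using Sym2.ind with
      | _ i j =>
        have hij : i ≠ j := by simpa using hs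
        simp only [pat, Sym2.map_mk]
        rcases lt_or_gt_of_ne hij with hlt | hlt
        · exact h' _ _ (by simpa using hlt)
        · rw [Sym2.eq_swap]
          exact h' _ _ (by simpa using hlt))
  have hφ : Function.Bijective φ := by
    constructor
    · intro x y
      induction x using Quot.ind with
      | _ u =>
      induction y using Quot.ind with
      | _ v =>
      intro h
      exact Quot.sound (pat_inj m u.1 v.1 (heq u v) h)
    · intro g
      obtain ⟨u, hu, hg⟩ := pat_surj m b hsum hb' g
      exact ⟨Quot.mk _ ⟨u, hu⟩, hg⟩
  classical
  rw [Nat.card_eq_of_bijective φ hφ, Nat.card_eq_fintype_card, Fintype.card_fun, ZMod.card,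
    Sym2.card_subtype_not_diag, Fintype.card_fin]
  rfl

end Veronese
end

section
/- Let n ≥ 3 be odd. For any triple of pairwise distinct indices i, j, k ∈ [n], as elements of k[x]/J_n one has x_{ij} · p^+_{n,k} = x_{jk} · p^+_{n,i}; that is, x_{ij} · p^+_{n,k} − x_{jk} · p^+_{n,i} ∈ J_n. -/
open scoped BigOperators

namespace Veronese

open MvPolynomial

variable (n : ℕ)

variable (k : Type*) [Field k]

lemma VN_add (u v : Sym2 (Fin n) →₀ ℕ) : VN n (u + v) = VN n u + VN n v := by
  funext a
  simp [VN, add_mul, Finset.sum_add_distrib]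

lemma VN_single (s : Sym2 (Fin n)) : VN n (Finsupp.single s 1) = wtN n s := by
  funext a
  simp [VN, Finsupp.single_apply]

lemma wtN_rel (i j : Fin n) : wtN n s(i, i) + wtN n s(j, j) = wtN n s(i, j) + wtN n s(i, j) := by
  funext a
  simp only [wtN, Sym2.lift_mk, Pi.add_apply]
  ring

/-- If the edge `ij` is absent and the degree at `i` is `n-1`, the loop at `i` is present. -/
lemma loop_pos (i j : Fin n) (hij : i ≠ j) (hn : 3 ≤ n) (w : Sym2 (Fin n) →₀ ℕ)
    (hw : ∀ s : Sym2 (Fin n), ¬s.IsDiag → w s ≤ 1) (h0 : w s(i, j) = 0)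
    (hd : n - 1 ≤ VN n w i) : 1 ≤ w s(i, i) := by
  classical
  by_contra hcon
  have hii : w s(i, i) = 0 := by omega
  have h1 : VN n w i ≤ ∑ s : Sym2 (Fin n), ∑ v ∈ ((Finset.univ.erase i).erase j : Finset (Fin n)),
      (if s = s(i, v) then 1 else 0) := by
    unfold VN
    apply Finset.sum_le_sum
    intro s _
    have key : ∀ b : Fin n, w s(i, b) * wtN n s(i, b) i ≤
        ∑ v ∈ ((Finset.univ.erase i).erase j : Finset (Fin n)),
          (if s(i, b) = s(i, v) then 1 else 0) := by
      intro b
      by_cases hbi : b = i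
      · subst hbi; simp [hii]
      by_cases hbj : b = j
      · subst hbj; simp [h0]
      have hle : w s(i, b) ≤ 1 := hw _ (by simpa using fun h => hbi h.symm)
      have hwt : wtN n s(i, b) i = 1 := by
        simp [wtN, Ne.symm hbi]
      rw [hwt, mul_one]
      refine hle.trans ?_
      have := Finset.single_le_sum
        (s := ((Finset.univ.erase i).erase j : Finset (Fin n)))
        (f := fun v => if s(i, b) = s(i, v) then 1 else 0)
        (fun _ _ => Nat.zero_le _) (a := b) (by simp [hbi, hbj])
      simpa using this
    induction s using Sym2.ind with
    | _ a b =>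
      by_cases hai : i = a
      · subst hai; exact key b
      by_cases hbi : i = b
      · subst hbi; rw [Sym2.eq_swap]; exact key a
      simp [wtN, hai, hbi]
  rw [Finset.sum_comm] at h1
  simp only [Finset.sum_ite_eq', Finset.mem_univ, if_true, Finset.sum_const, smul_eq_mul,
    mul_one] at h1
  rw [Finset.card_erase_of_mem (by simp [hij.symm]), Finset.card_erase_of_mem (by simp)] at h1
  simp at h1
  omega

/-- toggling the edge `ij` (as multiplication by `x_{ij}`) -/
noncomputable def tog (i j : Fin n) (u : Sym2 (Fin n) →₀ ℕ) : Sym2 (Fin n) →₀ ℕ :=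
  if u s(i, j) = 0 then u + Finsupp.single s(i, j) 1
  else u - Finsupp.single s(i, j) 1 + (Finsupp.single s(i, i) 1 + Finsupp.single s(j, j) 1)

/-- the inverse toggle -/
noncomputable def untog (i j : Fin n) (u : Sym2 (Fin n) →₀ ℕ) : Sym2 (Fin n) →₀ ℕ :=
  if u s(i, j) = 0 then
    u - (Finsupp.single s(i, i) 1 + Finsupp.single s(j, j) 1) + Finsupp.single s(i, j) 1
  else u - Finsupp.single s(i, j) 1

lemma VN_tog (i j : Fin n) (u : Sym2 (Fin n) →₀ ℕ) :
    VN n (tog n i j u) = VN n u + wtN n s(i, j) := by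
  unfold tog
  split_ifs with h
  · rw [VN_add, VN_single]
  · have hle : Finsupp.single s(i, j) 1 ≤ u := by
      rw [Finsupp.single_le_iff]; omega
    conv_rhs => rw [← tsub_add_cancel_of_le hle]
    rw [VN_add, VN_add, VN_add, VN_single, VN_single, VN_single, wtN_rel]
    ring

lemma untog_tog (i j : Fin n) (hij : i ≠ j) (u : Sym2 (Fin n) →₀ ℕ)
    (hu : u s(i, j) ≤ 1) : untog n i j (tog n i j u) = u := by
  have h1 : s(i, i) ≠ s(i, j) := by simp [hij]
  have h2 : s(j, j) ≠ s(i, j) := by simp [hij.symm]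
  by_cases h : u s(i, j) = 0
  · have e1 : tog n i j u = u + Finsupp.single s(i, j) 1 := by simp [tog, h]
    rw [e1]; simp [untog]
  · have e1 : tog n i j u = u - Finsupp.single s(i, j) 1
        + (Finsupp.single s(i, i) 1 + Finsupp.single s(j, j) 1) := by simp [tog, h]
    have hle : Finsupp.single s(i, j) 1 ≤ u := by
      rw [Finsupp.single_le_iff]; omega
    have e2 : tog n i j u s(i, j) = 0 := by
      rw [e1]; simp [Finsupp.single_apply, h1, h2]; omega
    rw [untog, if_pos e2, e1, add_tsub_cancel_right, tsub_add_cancel_of_le hle]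

lemma tog_untog (i j : Fin n) (hij : i ≠ j) (u : Sym2 (Fin n) →₀ ℕ)
    (hu : u s(i, j) ≤ 1) (hl : u s(i, j) = 0 → 1 ≤ u s(i, i) ∧ 1 ≤ u s(j, j)) :
    tog n i j (untog n i j u) = u := by
  have h1 : s(i, i) ≠ s(i, j) := by simp [hij]
  have h2 : s(j, j) ≠ s(i, j) := by simp [hij.symm]
  have h3 : s(i, i) ≠ s(j, j) := by simp [hij]
  by_cases h : u s(i, j) = 0
  · obtain ⟨hi, hj⟩ := hl h
    have e1 : untog n i j u = u - (Finsupp.single s(i, i) 1 + Finsupp.single s(j, j) 1)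
        + Finsupp.single s(i, j) 1 := by simp [untog, h]
    have hle : Finsupp.single s(i, i) 1 + Finsupp.single s(j, j) 1 ≤ u := by
      intro s
      simp only [Finsupp.add_apply, Finsupp.single_apply]
      split_ifs with ha hb hb
      · exact absurd (ha.trans hb.symm) h3
      · subst ha; omega
      · subst hb; omega
      · omega
    have e2 : ¬ untog n i j u s(i, j) = 0 := by
      rw [e1]; simp
    rw [tog, if_neg e2, e1, add_tsub_cancel_right, tsub_add_cancel_of_le hle]
  · have e1 : untog n i j u = u - Finsupp.single s(i, j) 1 := by simp [untog, h]
    have hle : Finsupp.single s(i, j) 1 ≤ u := by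
      rw [Finsupp.single_le_iff]; omega
    have e2 : untog n i j u s(i, j) = 0 := by
      rw [e1]; simp; omega
    rw [tog, if_pos e2, e1, tsub_add_cancel_of_le hle]

lemma tog_le (i j : Fin n) (u : Sym2 (Fin n) →₀ ℕ)
    (hu : ∀ s : Sym2 (Fin n), ¬s.IsDiag → u s ≤ 1) :
    ∀ s : Sym2 (Fin n), ¬s.IsDiag → tog n i j u s ≤ 1 := by
  intro s hs
  have h1 : s(i, i) ≠ s := by rintro rfl; simp at hs
  have h2 : s(j, j) ≠ s := by rintro rfl; simp at hs
  have := hu s hs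
  unfold tog
  split_ifs with h
  · by_cases hh : s(i, j) = s
    · subst hh; simp [h]
    · simpa [Finsupp.single_apply, hh]
  · simp [Finsupp.single_apply, h1, h2]; omega

lemma untog_le (i j : Fin n) (u : Sym2 (Fin n) →₀ ℕ)
    (hu : ∀ s : Sym2 (Fin n), ¬s.IsDiag → u s ≤ 1) :
    ∀ s : Sym2 (Fin n), ¬s.IsDiag → untog n i j u s ≤ 1 := by
  intro s hs
  have := hu s hs
  unfold untog
  split_ifs with h
  · by_cases hh : s(i, j) = s
    · subst hh; simp [h]
    · simp [Finsupp.single_apply, hh]; omega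
  · simp only [Finsupp.tsub_apply]; omega

lemma minor_mem (i j : Fin n) (hij : i ≠ j) :
    (X s(i, i) * X s(j, j) - X s(i, j) ^ 2 : R n k) ∈ Jideal n k := by
  rcases lt_or_gt_of_ne hij with h | h
  · exact Ideal.subset_span ⟨i, j, h, rfl⟩
  · refine Ideal.subset_span ⟨j, i, h, ?_⟩
    rw [Sym2.eq_swap (a := i) (b := j)]; ring

lemma X_mul_tog (i j : Fin n) (hij : i ≠ j) (u : Sym2 (Fin n) →₀ ℕ) :
    X s(i, j) * monomial u (1 : k) - monomial (tog n i j u) 1 ∈ Jideal n k := by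
  unfold tog
  split_ifs with h
  · rw [X, monomial_mul, add_comm u]; simp
  · have hle : Finsupp.single s(i, j) 1 ≤ u := by
      rw [Finsupp.single_le_iff]; omega
    obtain ⟨v, rfl⟩ := exists_add_of_le hle
    rw [add_tsub_cancel_left]
    have e1 : (monomial (Finsupp.single s(i, j) 1 + v) (1 : k)) = X s(i, j) * monomial v 1 := by
      rw [X, monomial_mul, one_mul]
    have e2 : (monomial (v + (Finsupp.single s(i, i) 1 + Finsupp.single s(j, j) 1)) (1 : k))
        = monomial v 1 * (X s(i, i) * X s(j, j)) := by
      simp only [X, monomial_mul, one_mul]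
    rw [e1, e2]
    have := (Jideal n k).mul_mem_left (-monomial v 1) (minor_mem n k i j hij)
    convert this using 1
    ring

lemma X_mul_pplus (hn : 3 ≤ n) (i j : Fin n) (hij : i ≠ j) (b : Fin n → ℕ)
    (hbi : b i = n - 2) (hbj : b j = n - 2) :
    X s(i, j) * pplusAt n k b - pplusAt n k (b + wtN n s(i, j)) ∈ Jideal n k := by
  have hsum : pplusAt n k (b + wtN n s(i, j)) =
      ∑ u ∈ (fiberFinset n b).filter (fun u => ∀ s : Sym2 (Fin n), ¬s.IsDiag → u s ≤ 1),
        monomial (tog n i j u) (1 : k) := by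
    unfold pplusAt
    symm
    have hnd : ¬ (s(i, j)).IsDiag := by simpa using hij
    have hback : ∀ u : Sym2 (Fin n) →₀ ℕ, VN n u = b + wtN n s(i, j) →
        (∀ s : Sym2 (Fin n), ¬s.IsDiag → u s ≤ 1) → tog n i j (untog n i j u) = u := by
      intro u h1 h2
      refine tog_untog n i j hij u (h2 _ hnd) fun h0 => ⟨?_, ?_⟩
      · refine loop_pos n i j hij hn u h2 h0 ?_
        rw [h1]; simp [wtN, hbi]; omega
      · refine loop_pos n j i hij.symm hn u h2 (by rwa [Sym2.eq_swap]) ?_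
        rw [h1]; simp [wtN, hbj]; omega
    refine Finset.sum_bij' (fun u _ => tog n i j u) (fun u _ => untog n i j u) ?_ ?_ ?_ ?_ ?_
    · intro u hu
      simp only [fiberFinset, fiber, Finset.mem_filter, Set.Finite.mem_toFinset,
        Set.mem_ofPred_eq] at hu ⊢
      exact ⟨by rw [VN_tog, hu.1], tog_le n i j u hu.2⟩
    · intro u hu
      simp only [fiberFinset, fiber, Finset.mem_filter, Set.Finite.mem_toFinset,
        Set.mem_ofPred_eq] at hu ⊢
      refine ⟨?_, untog_le n i j u hu.2⟩
      have := VN_tog n i j (untog n i j u)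
      rw [hback u hu.1 hu.2, hu.1] at this
      exact (add_right_cancel this).symm
    · intro u hu
      simp only [Finset.mem_filter] at hu
      exact untog_tog n i j hij u (hu.2 _ hnd)
    · intro u hu
      simp only [fiberFinset, fiber, Finset.mem_filter, Set.Finite.mem_toFinset,
        Set.mem_ofPred_eq] at hu
      exact hback u hu.1 hu.2
    · intro u hu; rfl
  rw [hsum, pplusAt, Finset.mul_sum, ← Finset.sum_sub_distrib]
  exact Ideal.sum_mem _ fun u _ => X_mul_tog n k i j hij u

/-- For odd `n ≥ 3` and pairwise distinct `i, j, l ∈ [n]`: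
`x_{ij} · p⁺_{n,l} = x_{jl} · p⁺_{n,i}` in `k[x]/J_n`. -/
theorem syzygy_pplus_odd (n : ℕ) (hn : 3 ≤ n) (hodd : Odd n)
    (k : Type*) [Field k] (i j l : Fin n)
    (hij : i ≠ j) (hjl : j ≠ l) (hil : i ≠ l) :
    X s(i, j) * pplusOdd n k l - X s(j, l) * pplusOdd n k i ∈ Jideal n k := by
  have h1 := X_mul_pplus n k hn i j hij (fun a => (n - 2) + if a = l then 1 else 0)
    (by simp [hil]) (by simp [hjl])
  have h2 := X_mul_pplus n k hn j l hjl (fun a => (n - 2) + if a = i then 1 else 0)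
    (by simp [hij.symm]) (by simp [hil.symm])
  have hb : (fun a => (n - 2) + if a = l then 1 else 0) + wtN n s(i, j)
      = (fun a => (n - 2) + if a = i then 1 else 0) + wtN n s(j, l) := by
    funext a
    simp only [wtN, Sym2.lift_mk, Pi.add_apply]
    ring
  rw [hb] at h1
  have := (Jideal n k).sub_mem h1 h2
  rw [sub_sub_sub_cancel_right] at this
  exact this

end Veronese
end
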